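/- Let Ω = (a,b) × (c,d) be an open rectangle in ℝ², let 0 < α₁ < 1, and let v : ℝ² → ℝ be smooth with compact support contained in Ω. Then ∫_Ω (∂_x v)(x,y) · (𝓘_x^{α₁} ∂_x v)(x,y) dx dy ≥ cos(α₁π/2) · ∫_Ω ((𝓘_x^{α₁/2} ∂_x v)(x,y))² dx dy, where ∂_x v denotes the partial derivative of v with respect to x. -/

import Mathlib

open MeasureTheory Real Set

/-- Partial left Riemann–Liouville fractional integral in the `x`-variable, base point `a`:
`(𝓘_x^{α} p)(x,y) = (1/Γ(α)) ∫_a^x (x−s)^{α−1} p(s,y) ds`. -/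
noncomputable def leftRLx (a α : ℝ) (p : ℝ × ℝ → ℝ) (z : ℝ × ℝ) : ℝ :=
  (1 / Real.Gamma α) * ∫ s in a..z.1, (z.1 - s) ^ (α - 1) * p (s, z.2)

/-- Partial derivative with respect to the first variable. -/
noncomputable def partialX (v : ℝ × ℝ → ℝ) (z : ℝ × ℝ) : ℝ :=
  fderiv ℝ v z (1, 0)

/-
With `K_γ(u) = u₊ ^ (γ - 1) / Γ(γ)`, the correlation of `K_{α/2}` with itself is a multiple of
`|s - t| ^ (α - 1)`, and the reflection formula for `Γ` gives the constant:
`cos(απ/2) ∫ K_{α/2}(x - s) K_{α/2}(x - t) dx = (K_α(s - t) + K_α(t - s)) / 2`, the integral being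
over the whole line. Integrated against `p(s, y) p(t, y)`, where `p = ∂_x v`, this says that the two
sides of the claim would be equal if `x` ran over `ℝ` in the integral of `(𝓘_x^{α/2} p)²`;
restricting `x` to `(a, b)` drops a nonnegative amount. The double integrals converge absolutely by
Schur's test, since `p ∈ L²`.
-/

/-- The normalised Riemann–Liouville kernel `u₊ ^ (γ - 1) / Γ(γ)`, convolution with which is the
left fractional integral of order `γ`. -/
noncomputable def rlKernel (γ u : ℝ) : ℝ :=
  (Ioi (0 : ℝ)).indicator (fun u => u ^ (γ - 1) / Gamma γ) u

/-- The left Riemann–Liouville integral of order `γ` of the measure with density `p` with respect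
to `μ`. The base point is encoded in `μ`: restricting Lebesgue measure to `(a, b)` gives the
integral based at `a` at the points of `(a, b)`. -/
noncomputable def fracIntegral (μ : Measure ℝ) (γ : ℝ) (p : ℝ → ℝ) (x : ℝ) : ℝ :=
  ∫ s, rlKernel γ (x - s) * p s ∂μ

section Kernel

variable {γ α h s t u : ℝ}

lemma rlKernel_of_pos (hu : 0 < u) : rlKernel γ u = u ^ (γ - 1) / Gamma γ :=
  indicator_of_mem (s := Ioi (0 : ℝ)) hu _

lemma rlKernel_of_nonpos (hu : u ≤ 0) : rlKernel γ u = 0 :=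
  indicator_of_notMem (s := Ioi (0 : ℝ)) (not_lt.mpr hu) _

lemma rlKernel_nonneg (hγ : 0 < γ) (u : ℝ) : 0 ≤ rlKernel γ u :=
  indicator_nonneg (fun _ hu => div_nonneg (rpow_nonneg (le_of_lt hu) _)
    (Gamma_pos_of_pos hγ).le) u

@[fun_prop]
lemma measurable_rlKernel (γ : ℝ) : Measurable (rlKernel γ) :=
  ((measurable_id.pow_const _).div_const _).indicator measurableSet_Ioi

lemma integrableOn_Iio_rlKernel (hγ : 0 < γ) (L : ℝ) : IntegrableOn (rlKernel γ) (Iio L) := by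
  have hIoo : IntegrableOn (fun u : ℝ => u ^ (γ - 1)) (Ioo 0 L) := by
    rcases le_total 0 L with hL | hL
    · exact (intervalIntegrable_iff_integrableOn_Ioo_of_le hL).mp
        (intervalIntegral.intervalIntegrable_rpow' (by linarith))
    · simp [Ioo_eq_empty_of_le hL]
  rw [show rlKernel γ = (Ioi 0).indicator fun u => u ^ (γ - 1) / Gamma γ from rfl, IntegrableOn,
    integrable_indicator_iff measurableSet_Ioi, IntegrableOn,
    Measure.restrict_restrict measurableSet_Ioi, Ioi_inter_Iio]
  exact hIoo.div_const _

lemma lintegral_rpow_mul_exp_neg_mul_Ioi {a r : ℝ} (ha : 0 < a) (hr : 0 < r) :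
    ∫⁻ t in Ioi (0 : ℝ), .ofReal (t ^ (a - 1) * exp (-(r * t))) =
      .ofReal ((1 / r) ^ a * Gamma a) := by
  have hpos : 0 < (1 / r) ^ a * Gamma a := by
    have := Gamma_pos_of_pos ha
    positivity
  rw [← integral_rpow_mul_exp_neg_mul_Ioi ha hr] at hpos ⊢
  refine (ofReal_integral_eq_lintegral_ofReal (.of_integral_ne_zero hpos.ne') ?_).symm
  exact ae_restrict_of_forall_mem measurableSet_Ioi fun t ht =>
    mul_nonneg (rpow_nonneg (le_of_lt ht) _) (exp_pos _).le

/- Writing `(x + h) ^ (-(p + q)) * Γ(p + q)` as the Laplace transform of `r ^ (p + q - 1)` and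
exchanging the integrals reduces both of them to Gamma integrals. -/
lemma lintegral_rpow_mul_add_rpow_Ioi {p q : ℝ} (hp : 0 < p) (hq : 0 < q) (hh : 0 < h) :
    ∫⁻ x in Ioi (0 : ℝ), .ofReal (x ^ (p - 1) * ((1 / (x + h)) ^ (p + q) * Gamma (p + q))) =
      .ofReal (Gamma p * Gamma q * (1 / h) ^ q) := by
  have laplace {x : ℝ} (hx : x ∈ Ioi (0 : ℝ)) :
      ENNReal.ofReal (x ^ (p - 1) * ((1 / (x + h)) ^ (p + q) * Gamma (p + q))) =
        ∫⁻ r in Ioi (0 : ℝ), .ofReal (x ^ (p - 1) * exp (-(r * x))) *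
          .ofReal (r ^ (p + q - 1) * exp (-(h * r))) := by
    rw [mem_Ioi] at hx
    rw [ENNReal.ofReal_mul (by positivity),
      ← lintegral_rpow_mul_exp_neg_mul_Ioi (by positivity) (by positivity),
      ← lintegral_const_mul' _ _ ENNReal.ofReal_ne_top]
    refine lintegral_congr fun r => ?_
    rw [← ENNReal.ofReal_mul (by positivity), ← ENNReal.ofReal_mul (by positivity),
      show -((x + h) * r) = -(r * x) + -(h * r) by ring, exp_add]
    ring_nf
  have inner {r : ℝ} (hr : r ∈ Ioi (0 : ℝ)) :
      ∫⁻ x in Ioi (0 : ℝ), .ofReal (x ^ (p - 1) * exp (-(r * x))) *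
          .ofReal (r ^ (p + q - 1) * exp (-(h * r))) =
        .ofReal (Gamma p) * ENNReal.ofReal (r ^ (q - 1) * exp (-(h * r))) := by
    rw [mem_Ioi] at hr
    have hΓ := Gamma_pos_of_pos hp
    rw [lintegral_mul_const' _ _ ENNReal.ofReal_ne_top, lintegral_rpow_mul_exp_neg_mul_Ioi hp hr,
      ← ENNReal.ofReal_mul (by positivity), ← ENNReal.ofReal_mul hΓ.le,
      show p + q - 1 = p + (q - 1) by ring, rpow_add hr, one_div, inv_rpow hr.le]
    field_simp
  rw [setLIntegral_congr_fun measurableSet_Ioi fun x hx => laplace hx,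
    lintegral_lintegral_swap (by fun_prop),
    setLIntegral_congr_fun measurableSet_Ioi fun r hr => inner hr,
    lintegral_const_mul' _ _ ENNReal.ofReal_ne_top, lintegral_rpow_mul_exp_neg_mul_Ioi hq hh,
    ← ENNReal.ofReal_mul (Gamma_pos_of_pos hp).le]
  ring_nf

lemma integral_rpow_mul_add_rpow_Ioi {p q : ℝ} (hp : 0 < p) (hq : 0 < q) (hh : 0 < h) :
    ∫ x in Ioi (0 : ℝ), x ^ (p - 1) * (x + h) ^ (-(p + q)) =
      Gamma p * Gamma q / Gamma (p + q) * h ^ (-q) := by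
  have := Gamma_pos_of_pos hp
  have := Gamma_pos_of_pos hq
  have hΓ := Gamma_pos_of_pos (add_pos hp hq)
  have key : ∫ x in Ioi (0 : ℝ), x ^ (p - 1) * ((1 / (x + h)) ^ (p + q) * Gamma (p + q)) =
      Gamma p * Gamma q * (1 / h) ^ q := by
    rw [integral_eq_lintegral_of_nonneg_ae, lintegral_rpow_mul_add_rpow_Ioi hp hq hh,
      ENNReal.toReal_ofReal (by positivity)]
    · refine ae_restrict_of_forall_mem measurableSet_Ioi fun x (hx : 0 < x) => ?_
      simp only [Pi.zero_apply]
      positivity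
    · exact Measurable.aestronglyMeasurable (by fun_prop)
  simp only [← mul_assoc, integral_mul_const] at key
  rw [div_mul_eq_mul_div, eq_div_iff hΓ.ne', rpow_neg hh.le, ← inv_rpow hh.le, ← one_div, ← key]
  congr 1
  refine setIntegral_congr_fun measurableSet_Ioi fun x (hx : 0 < x) => ?_
  simp only [one_div, inv_rpow (add_pos hx hh).le, rpow_neg (add_pos hx hh).le]

lemma cos_mul_pi_div_two_pos (h0 : 0 < α) (h1 : α < 1) : 0 < cos (α * π / 2) :=
  cos_pos_of_mem_Ioo ⟨by nlinarith [pi_pos], by nlinarith [pi_pos]⟩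

/- The reflection formula at `α` and at `α / 2`, combined with `sin πα = 2 sin(πα/2) cos(πα/2)`. -/
lemma cos_mul_Gamma_mul_Gamma_one_sub (h0 : 0 < α) (h1 : α < 1) :
    2 * cos (α * π / 2) * (Gamma α * Gamma (1 - α)) = Gamma (α / 2) * Gamma (1 - α / 2) := by
  have hsin : 0 < sin (α * π / 2) :=
    sin_pos_of_pos_of_lt_pi (by positivity) (by nlinarith [pi_pos])
  have hcos := cos_mul_pi_div_two_pos h0 h1
  rw [Gamma_mul_Gamma_one_sub, Gamma_mul_Gamma_one_sub, show π * (α / 2) = α * π / 2 by ring,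
    show π * α = 2 * (α * π / 2) by ring, sin_two_mul]
  generalize α * π / 2 = θ at *
  field_simp

lemma cos_mul_integral_rlKernel_mul_rlKernel_of_lt (h0 : 0 < α) (h1 : α < 1) (hst : s < t) :
    cos (α * π / 2) * ∫ x, rlKernel (α / 2) (x - s) * rlKernel (α / 2) (x - t) =
      rlKernel α (t - s) / 2 := by
  have hh : 0 < t - s := sub_pos.mpr hst
  have hind (x : ℝ) : rlKernel (α / 2) (x + (t - s)) * rlKernel (α / 2) x =
      (Ioi (0 : ℝ)).indicator (fun x => x ^ (α / 2 - 1) * (x + (t - s)) ^ (-(α / 2 + (1 - α))) /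
        Gamma (α / 2) ^ 2) x := by
    rcases lt_or_ge 0 x with hx | hx
    · rw [indicator_of_mem (s := Ioi (0 : ℝ)) hx, rlKernel_of_pos hx,
        rlKernel_of_pos (by positivity), show -(α / 2 + (1 - α)) = α / 2 - 1 by ring]
      ring
    · rw [indicator_of_notMem (s := Ioi (0 : ℝ)) hx.not_gt, rlKernel_of_nonpos hx, mul_zero]
  have hint : ∫ x, rlKernel (α / 2) (x - s) * rlKernel (α / 2) (x - t) =
      Gamma (α / 2) * Gamma (1 - α) / Gamma (1 - α / 2) * (t - s) ^ (α - 1) /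
        Gamma (α / 2) ^ 2 := by
    rw [← integral_add_right_eq_self _ t]
    simp only [add_sub_cancel_right, add_sub_assoc, hind]
    rw [integral_indicator measurableSet_Ioi, integral_div,
      integral_rpow_mul_add_rpow_Ioi (by positivity) (by linarith) hh]
    ring_nf
  have := Gamma_pos_of_pos h0
  have := Gamma_pos_of_pos (half_pos h0)
  have hΓ := Gamma_pos_of_pos (show 0 < 1 - α / 2 by linarith)
  have reflection := cos_mul_Gamma_mul_Gamma_one_sub h0 h1
  rw [hint, rlKernel_of_pos hh]
  generalize Gamma (1 - α / 2) = G at *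
  field_simp
  linear_combination reflection

lemma cos_mul_integral_rlKernel_mul_rlKernel (h0 : 0 < α) (h1 : α < 1) (hst : s ≠ t) :
    cos (α * π / 2) * ∫ x, rlKernel (α / 2) (x - s) * rlKernel (α / 2) (x - t) =
      (rlKernel α (s - t) + rlKernel α (t - s)) / 2 := by
  rcases hst.lt_or_gt with h | h
  · rw [cos_mul_integral_rlKernel_mul_rlKernel_of_lt h0 h1 h,
      rlKernel_of_nonpos (u := s - t) (by linarith), zero_add]
  · simp_rw [mul_comm (rlKernel (α / 2) (_ - s))]
    rw [cos_mul_integral_rlKernel_mul_rlKernel_of_lt h0 h1 h,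
      rlKernel_of_nonpos (u := t - s) (by linarith), add_zero]

lemma integrable_rlKernel_mul_rlKernel (h0 : 0 < α) (h1 : α < 1) (hst : s ≠ t) :
    Integrable fun x => rlKernel (α / 2) (x - s) * rlKernel (α / 2) (x - t) := by
  have hpos {u : ℝ} (hu : 0 < u) : 0 < rlKernel α u := by
    have := Gamma_pos_of_pos h0
    rw [rlKernel_of_pos hu]
    positivity
  have hsum : 0 < (rlKernel α (s - t) + rlKernel α (t - s)) / 2 := by
    rcases hst.lt_or_gt with h | h
    · linarith [hpos (sub_pos.mpr h), rlKernel_nonneg h0 (s - t)]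
    · linarith [hpos (sub_pos.mpr h), rlKernel_nonneg h0 (t - s)]
  rw [← cos_mul_integral_rlKernel_mul_rlKernel h0 h1 hst] at hsum
  exact .of_integral_ne_zero (right_ne_zero_of_mul hsum.ne')

end Kernel

lemma ae_prod_fst_ne_snd {X : Type*} [MeasurableSpace X] [MeasurableEq X] {μ ν : Measure X}
    [SFinite ν] [NullSingletonClass ν] : ∀ᵐ z ∂(μ.prod ν), z.1 ≠ z.2 := by
  refine (Measure.ae_prod_iff_ae_ae
    (measurableSet_eq_fun measurable_fst measurable_snd).compl).mpr (.of_forall fun x => ?_)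
  filter_upwards [Measure.ae_ne ν x] with y hy using hy.symm

section Energy

variable {μ : Measure ℝ} [SFinite μ] {γ α : ℝ} {p : ℝ → ℝ}

lemma fracIntegral_sq (x : ℝ) : fracIntegral μ γ p x ^ 2 =
    ∫ z, (rlKernel γ (x - z.1) * rlKernel γ (x - z.2)) * (p z.1 * p z.2) ∂(μ.prod μ) := by
  rw [sq, fracIntegral, ← integral_prod_mul]
  simp only [mul_mul_mul_comm]

variable [NullSingletonClass μ]

lemma integrable_rlKernel_mul_rlKernel_prod (h0 : 0 < α) (h1 : α < 1)
    (hp : AEStronglyMeasurable p μ)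
    (hE : Integrable (fun z => rlKernel α (z.1 - z.2) * (p z.1 * p z.2)) (μ.prod μ)) :
    Integrable (fun w : ℝ × ℝ × ℝ => (rlKernel (α / 2) (w.1 - w.2.1) *
      rlKernel (α / 2) (w.1 - w.2.2)) * (p w.2.1 * p w.2.2)) (volume.prod (μ.prod μ)) := by
  have hpp : AEStronglyMeasurable (fun w : ℝ × ℝ × ℝ => p w.2.1 * p w.2.2)
      (volume.prod (μ.prod μ)) := (hp.comp_fst.mul hp.comp_snd).comp_snd
  have hk : Measurable fun w : ℝ × ℝ × ℝ =>
      rlKernel (α / 2) (w.1 - w.2.1) * rlKernel (α / 2) (w.1 - w.2.2) := by fun_prop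
  rw [integrable_prod_iff' (by exact hk.aestronglyMeasurable.mul hpp)]
  constructor
  · filter_upwards [ae_prod_fst_ne_snd] with z hz using
      (integrable_rlKernel_mul_rlKernel h0 h1 hz).mul_const _
  · refine ((hE.norm.add hE.norm.swap).const_mul (1 / (2 * cos (α * π / 2)))).congr ?_
    filter_upwards [ae_prod_fst_ne_snd] with z hz
    have hcorr := cos_mul_integral_rlKernel_mul_rlKernel h0 h1 hz
    have hcos := cos_mul_pi_div_two_pos h0 h1
    simp only [norm_mul, norm_of_nonneg (rlKernel_nonneg (half_pos h0) _),
      norm_of_nonneg (rlKernel_nonneg h0 _), integral_mul_const, Pi.add_apply,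
      Function.comp_apply, Prod.fst_swap, Prod.snd_swap]
    field_simp
    linear_combination (-2 * ‖p z.1‖ * ‖p z.2‖) * hcorr

lemma integrable_sq_fracIntegral (h0 : 0 < α) (h1 : α < 1) (hp : AEStronglyMeasurable p μ)
    (hE : Integrable (fun z => rlKernel α (z.1 - z.2) * (p z.1 * p z.2)) (μ.prod μ)) :
    Integrable fun x => fracIntegral μ (α / 2) p x ^ 2 := by
  simp only [fracIntegral_sq]
  exact (integrable_rlKernel_mul_rlKernel_prod h0 h1 hp hE).integral_prod_left

/- Integrating the two kernels in `x` first leaves the symmetrisation of the kernel of order `α`,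
which has the same double integral against `p ⊗ p` as that kernel itself. -/
lemma cos_mul_integral_sq_fracIntegral (h0 : 0 < α) (h1 : α < 1) (hp : AEStronglyMeasurable p μ)
    (hE : Integrable (fun z => rlKernel α (z.1 - z.2) * (p z.1 * p z.2)) (μ.prod μ)) :
    cos (α * π / 2) * ∫ x, fracIntegral μ (α / 2) p x ^ 2 =
      ∫ z, rlKernel α (z.1 - z.2) * (p z.1 * p z.2) ∂(μ.prod μ) := by
  set E : ℝ × ℝ → ℝ := fun z => rlKernel α (z.1 - z.2) * (p z.1 * p z.2)
  have hsymm : ∀ᵐ z ∂(μ.prod μ), cos (α * π / 2) *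
      ∫ x, (rlKernel (α / 2) (x - z.1) * rlKernel (α / 2) (x - z.2)) * (p z.1 * p z.2) =
        (E z + E z.swap) / 2 := by
    filter_upwards [ae_prod_fst_ne_snd] with z hz
    rw [integral_mul_const, ← mul_assoc, cos_mul_integral_rlKernel_mul_rlKernel h0 h1 hz]
    simp only [E, Prod.fst_swap, Prod.snd_swap]
    ring
  simp only [fracIntegral_sq]
  rw [integral_integral_swap (integrable_rlKernel_mul_rlKernel_prod h0 h1 hp hE),
    ← integral_const_mul, integral_congr_ae hsymm, integral_div, integral_add hE (by exact hE.swap),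
    integral_prod_swap]
  ring

end Energy

section Parameter

variable {Y : Type*} [MeasurableSpace Y] {ν : Measure Y} [SFinite ν] {μ : Measure ℝ} [SFinite μ]
  {γ α : ℝ} {p : Y × ℝ → ℝ}

lemma integrable_mul_comp_sub {X : Type*} [MeasurableSpace X] {ρ : Measure X} [SFinite ρ]
    {f : X → ℝ} {φ : X → ℝ} {k : ℝ → ℝ} (hf : Integrable f ρ) (hφ : Measurable φ)
    (hk : Integrable k) : Integrable (fun w => f w.1 * k (φ w.1 - w.2)) (ρ.prod volume) := by
  have shear : MeasurePreserving (fun w : X × ℝ => (w.1, φ w.1 - w.2))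
      (ρ.prod volume) (ρ.prod volume) :=
    (MeasurePreserving.id ρ).skew_product (by fun_prop)
      (.of_forall fun x => (Measure.measurePreserving_sub_left volume (φ x)).map_eq)
  exact shear.integrable_comp_of_integrable (hf.mul_prod hk)

/- Schur's test: `2 |p(y, s) p(y, t)| ≤ p(y, s)² + p(y, t)²`, and either square is integrable
against an integrable kernel in `s - t`. -/
lemma integrable_comp_sub_mul_mul {k : ℝ → ℝ} (hk : Integrable k) (hμ : μ ≤ volume)
    (hp : MemLp p 2 (ν.prod μ)) :
    Integrable (fun w : Y × ℝ × ℝ => k (w.2.1 - w.2.2) * (p (w.1, w.2.1) * p (w.1, w.2.2)))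
      (ν.prod (μ.prod μ)) := by
  have weighted {k : ℝ → ℝ} (hk : Integrable k) : Integrable
      (fun w : Y × ℝ × ℝ => p (w.1, w.2.1) ^ 2 * k (w.2.1 - w.2.2)) (ν.prod (μ.prod μ)) := by
    have h := (integrable_mul_comp_sub hp.integrable_sq measurable_snd hk).mono_measure
      (Measure.prod_mono le_rfl hμ)
    rwa [← (measurePreserving_prodAssoc ν μ μ).integrable_comp_emb
      (MeasurableEquiv.measurableEmbedding _)]
  have hfst := weighted hk.norm
  have hsnd := ((MeasurePreserving.id ν).prod
    (Measure.measurePreserving_swap (μ := μ) (ν := μ))).integrable_comp_of_integrable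
      (weighted hk.comp_neg.norm)
  have hpm := hp.aestronglyMeasurable
  have hps : AEStronglyMeasurable (fun w : Y × ℝ × ℝ => p (w.1, w.2.1)) (ν.prod (μ.prod μ)) :=
    hpm.comp_quasiMeasurePreserving
      (QuasiMeasurePreserving.prodMap (.id ν) Measure.quasiMeasurePreserving_fst)
  have hpt : AEStronglyMeasurable (fun w : Y × ℝ × ℝ => p (w.1, w.2.2)) (ν.prod (μ.prod μ)) :=
    hpm.comp_quasiMeasurePreserving
      (QuasiMeasurePreserving.prodMap (.id ν) Measure.quasiMeasurePreserving_snd)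
  have hkm : AEStronglyMeasurable (fun w : Y × ℝ × ℝ => k (w.2.1 - w.2.2))
      (ν.prod (μ.prod μ)) :=
    ((hk.aestronglyMeasurable.comp_quasiMeasurePreserving
      (quasiMeasurePreserving_sub volume volume)).mono_measure (Measure.prod_mono hμ hμ)).comp_snd
  refine (hfst.add hsnd).mono' (hkm.mul (hps.mul hpt)) (.of_forall fun w => ?_)
  simp only [norm_mul, Pi.add_apply, Function.comp_apply, Prod.map_fst, Prod.map_snd, id,
    Prod.fst_swap, Prod.snd_swap, neg_sub, norm_eq_abs]
  have := two_mul_le_add_sq |p (w.1, w.2.1)| |p (w.1, w.2.2)|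
  simp only [sq_abs] at this
  nlinarith [abs_nonneg (k (w.2.1 - w.2.2)), sq_nonneg (p (w.1, w.2.1)),
    sq_nonneg (p (w.1, w.2.2))]

lemma integrable_rlKernel_mul_mul {a b : ℝ} (hγ : 0 < γ)
    (hp : MemLp p 2 (ν.prod (volume.restrict (Ioo a b)))) :
    Integrable (fun w : Y × ℝ × ℝ =>
      rlKernel γ (w.2.1 - w.2.2) * (p (w.1, w.2.1) * p (w.1, w.2.2)))
      (ν.prod ((volume.restrict (Ioo a b)).prod (volume.restrict (Ioo a b)))) := by
  have htrunc : Integrable ((Iio (b - a)).indicator (rlKernel γ)) :=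
    (integrable_indicator_iff measurableSet_Iio).mpr (integrableOn_Iio_rlKernel hγ _)
  refine (integrable_comp_sub_mul_mul htrunc Measure.restrict_le_self hp).congr ?_
  have hmem : ∀ᵐ z ∂((volume.restrict (Ioo a b)).prod (volume.restrict (Ioo a b))),
      z ∈ Ioo a b ×ˢ Ioo a b := by
    rw [Measure.prod_restrict]
    exact ae_restrict_mem (measurableSet_Ioo.prod measurableSet_Ioo)
  filter_upwards [Measure.quasiMeasurePreserving_snd.ae hmem] with w ⟨hs, ht⟩
  rw [indicator_of_mem (show w.2.1 - w.2.2 ∈ Iio (b - a) by rw [mem_Iio]; linarith [hs.2, ht.1])]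

lemma integral_mul_fracIntegral
    (hE : Integrable (fun w : Y × ℝ × ℝ =>
      rlKernel γ (w.2.1 - w.2.2) * (p (w.1, w.2.1) * p (w.1, w.2.2))) (ν.prod (μ.prod μ))) :
    ∫ z, p z * fracIntegral μ γ (fun s => p (z.1, s)) z.2 ∂(ν.prod μ) =
      ∫ w, rlKernel γ (w.2.1 - w.2.2) * (p (w.1, w.2.1) * p (w.1, w.2.2)) ∂(ν.prod (μ.prod μ)) := by
  have hassoc := measurePreserving_prodAssoc ν μ μ
  have hemb := (MeasurableEquiv.prodAssoc (α := Y) (β := ℝ) (γ := ℝ)).measurableEmbedding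
  have hE' : Integrable (fun w : (Y × ℝ) × ℝ =>
      rlKernel γ (w.1.2 - w.2) * (p w.1 * p (w.1.1, w.2))) ((ν.prod μ).prod μ) :=
    (hassoc.integrable_comp_emb hemb).mpr hE
  rw [← hassoc.integral_comp hemb]
  simp only [fracIntegral, ← integral_const_mul, mul_left_comm (p _)]
  exact (integral_prod _ hE').symm

variable [NullSingletonClass μ]

lemma integrable_sq_fracIntegral_prod (h0 : 0 < α) (h1 : α < 1)
    (hp : AEStronglyMeasurable p (ν.prod μ))
    (hE : Integrable (fun w : Y × ℝ × ℝ =>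
      rlKernel α (w.2.1 - w.2.2) * (p (w.1, w.2.1) * p (w.1, w.2.2))) (ν.prod (μ.prod μ))) :
    Integrable (fun z => fracIntegral μ (α / 2) (fun s => p (z.1, s)) z.2 ^ 2)
      (ν.prod volume) := by
  have hmeas : AEStronglyMeasurable
      (fun z : Y × ℝ => fracIntegral μ (α / 2) (fun s => p (z.1, s)) z.2) (ν.prod volume) := by
    have hps : AEStronglyMeasurable (fun w : (Y × ℝ) × ℝ => p (w.1.1, w.2))
        ((ν.prod volume).prod μ) :=
      hp.comp_quasiMeasurePreserving
        (QuasiMeasurePreserving.prodMap Measure.quasiMeasurePreserving_fst (.id μ))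
    have hk : Measurable fun w : (Y × ℝ) × ℝ => rlKernel (α / 2) (w.1.2 - w.2) := by fun_prop
    exact (hk.aestronglyMeasurable.mul hps).integral_prod_right'
  rw [integrable_prod_iff (by exact hmeas.pow 2)]
  constructor
  · filter_upwards [hE.prod_right_ae, hp.prodMk_left] with y hEy hpy using
      integrable_sq_fracIntegral h0 h1 hpy hEy
  · refine (hE.integral_prod_left.const_mul (1 / cos (α * π / 2))).congr ?_
    filter_upwards [hE.prod_right_ae, hp.prodMk_left] with y hEy hpy
    have hcos := cos_mul_pi_div_two_pos h0 h1
    simp only [norm_of_nonneg (sq_nonneg _)]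
    rw [← cos_mul_integral_sq_fracIntegral h0 h1 hpy hEy]
    field_simp

lemma cos_mul_integral_sq_fracIntegral_prod (h0 : 0 < α) (h1 : α < 1)
    (hp : AEStronglyMeasurable p (ν.prod μ))
    (hE : Integrable (fun w : Y × ℝ × ℝ =>
      rlKernel α (w.2.1 - w.2.2) * (p (w.1, w.2.1) * p (w.1, w.2.2))) (ν.prod (μ.prod μ))) :
    cos (α * π / 2) *
        ∫ z, fracIntegral μ (α / 2) (fun s => p (z.1, s)) z.2 ^ 2 ∂(ν.prod volume) =
      ∫ z, p z * fracIntegral μ α (fun s => p (z.1, s)) z.2 ∂(ν.prod μ) := by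
  rw [integral_mul_fracIntegral hE, integral_prod _ hE,
    integral_prod _ (integrable_sq_fracIntegral_prod h0 h1 hp hE), ← integral_const_mul]
  refine integral_congr_ae ?_
  filter_upwards [hE.prod_right_ae, hp.prodMk_left] with y hEy hpy using
    cos_mul_integral_sq_fracIntegral h0 h1 hpy hEy

end Parameter

lemma leftRLx_eq_fracIntegral {a b γ : ℝ} {p : ℝ × ℝ → ℝ} {z : ℝ × ℝ} (hz : z.1 ∈ Ioo a b) :
    leftRLx a γ p z =
      fracIntegral (volume.restrict (Ioo a b)) γ (fun s => p (s, z.2)) z.1 := by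
  have hvanish : ∀ s ∈ Ioo a b \ Ioo a z.1, rlKernel γ (z.1 - s) * p (s, z.2) = 0 := by
    intro s hs
    have : z.1 ≤ s := not_lt.mp fun h => hs.2 ⟨hs.1.1, h⟩
    rw [rlKernel_of_nonpos (by linarith), zero_mul]
  rw [leftRLx, fracIntegral, intervalIntegral.integral_of_le hz.1.le, integral_Ioc_eq_integral_Ioo,
    setIntegral_eq_of_subset_of_forall_sdiff_eq_zero measurableSet_Ioo
      (Ioo_subset_Ioo_right hz.2.le) hvanish, ← integral_const_mul]
  refine setIntegral_congr_fun measurableSet_Ioo fun s hs => ?_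
  simp only [rlKernel_of_pos (sub_pos.mpr hs.2)]
  ring

theorem stmt15_general {a b α : ℝ} (h0 : 0 < α) (h1 : α < 1) (t : Set ℝ)
    {p : ℝ × ℝ → ℝ} (hp : MemLp p 2 (volume.restrict (Ioo a b ×ˢ t))) :
    cos (α * π / 2) * ∫ z in Ioo a b ×ˢ t, leftRLx a (α / 2) p z ^ 2 ≤
      ∫ z in Ioo a b ×ˢ t, p z * leftRLx a α p z := by
  set μ := volume.restrict (Ioo a b)
  set ν := volume.restrict t
  have hrestrict : (volume.restrict (Ioo a b ×ˢ t) : Measure (ℝ × ℝ)) = μ.prod ν := by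
    rw [Measure.volume_eq_prod, Measure.prod_restrict]
  have hmem : ∀ᵐ z ∂(ν.prod μ), z.2 ∈ Ioo a b :=
    Measure.quasiMeasurePreserving_snd.ae (ae_restrict_mem measurableSet_Ioo)
  have hRL (γ : ℝ) : ∀ᵐ z ∂(ν.prod μ),
      leftRLx a γ p z.swap = fracIntegral μ γ (fun s => p (s, z.1)) z.2 :=
    hmem.mono fun z hz => leftRLx_eq_fracIntegral hz
  rw [hrestrict] at hp ⊢
  have hq : MemLp (p ∘ Prod.swap) 2 (ν.prod μ) :=
    hp.comp_measurePreserving Measure.measurePreserving_swap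
  have hE := integrable_rlKernel_mul_mul h0 hq
  have hsq := integrable_sq_fracIntegral_prod h0 h1 hq.1 hE
  have key := cos_mul_integral_sq_fracIntegral_prod h0 h1 hq.1 hE
  rw [← integral_prod_swap (μ := μ), ← integral_prod_swap (μ := μ) (f := fun z => p z * _)]
  calc cos (α * π / 2) * ∫ z, leftRLx a (α / 2) p z.swap ^ 2 ∂(ν.prod μ)
      = cos (α * π / 2) *
          ∫ z, fracIntegral μ (α / 2) (fun s => p (s, z.1)) z.2 ^ 2 ∂(ν.prod μ) := by
        rw [integral_congr_ae ((hRL (α / 2)).mono fun z hz => congrArg (· ^ 2) hz)]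
    _ ≤ cos (α * π / 2) *
          ∫ z, fracIntegral μ (α / 2) (fun s => p (s, z.1)) z.2 ^ 2 ∂(ν.prod volume) :=
        mul_le_mul_of_nonneg_left (integral_mono_measure
          (Measure.prod_mono le_rfl Measure.restrict_le_self) (.of_forall fun _ => sq_nonneg _) hsq)
          (cos_mul_pi_div_two_pos h0 h1).le
    _ = ∫ z, p z.swap * fracIntegral μ α (fun s => p (s, z.1)) z.2 ∂(ν.prod μ) := key
    _ = ∫ z, p z.swap * leftRLx a α p z.swap ∂(ν.prod μ) :=
        integral_congr_ae ((hRL α).mono fun z hz => congrArg (p z.swap * ·) hz.symm)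

theorem stmt15 (a b c d α₁ : ℝ) (hab : a < b) (hcd : c < d)
    (hα0 : 0 < α₁) (hα1 : α₁ < 1) (v : ℝ × ℝ → ℝ)
    (hv : ContDiff ℝ (⊤ : ℕ∞) v) (hcs : HasCompactSupport v)
    (hsupp : tsupport v ⊆ Set.Ioo a b ×ˢ Set.Ioo c d) :
    ∫ z in Set.Ioo a b ×ˢ Set.Ioo c d, partialX v z * leftRLx a α₁ (partialX v) z ≥
      Real.cos (α₁ * Real.pi / 2) *
        ∫ z in Set.Ioo a b ×ˢ Set.Ioo c d, (leftRLx a (α₁ / 2) (partialX v) z) ^ 2 := by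
  have hcont : Continuous (partialX v) :=
    (hv.continuous_fderiv (by simp)).clm_apply continuous_const
  exact stmt15_general hα0 hα1 (Ioo c d)
    ((hcont.memLp_of_hasCompactSupport (hcs.fderiv_apply ℝ (1, 0))).restrict _)
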